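/- There exists a constant C > 0 such that for all integers N ≥ 1, all t ∈ [0,1], and all α with 0 < α ≤ N^{−3/4}: |q_t^N(α) − 1| ≤ C·N^{−1/3}. -/

import Mathlib

open Set Filter

noncomputable def GP : ℝ → ℝ := fun x => x * Real.log x + (1 - x) * Real.log (1 - x)

noncomputable def Gt (f0 f1 : ℝ → ℝ) (t : ℝ) : ℝ → ℝ :=
  fun x => GP x + ((1 - t) * f0 x + t * f1 x)

noncomputable def Phase (G : ℝ → ℝ) (α : ℝ) : ℝ → ℝ :=
  fun x => (x - α) * deriv G x - (G x - G α)

noncomputable def Qnorm (G : ℝ → ℝ) (N : ℕ) (α : ℝ) : ℝ :=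
  2 * Real.pi * ∫ x in (0:ℝ)..1, Real.exp (-(N : ℝ) * Phase G α x)

noncomputable def RPhase (G : ℝ → ℝ) (α : ℝ) : ℝ → ℝ :=
  fun y => (1 / α) * Phase G α (α * (1 + y))

noncomputable def Leg (G : ℝ → ℝ) (S : Set ℝ) : ℝ → ℝ :=
  fun ρ => sSup ((fun x => x * ρ - G x) '' S)

noncomputable def QQ (G : ℝ → ℝ) (N : ℕ) (α : ℝ) : ℝ :=
  Qnorm G N α * Real.exp ((N : ℝ) * G α)

/-!
The phase is linear in the potential and, by the tangent line inequality, it is monotone with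
respect to the second derivative. Hence two pointwise facts about `f`, namely `|f''| ≤ M` and
`(GP + f)'' ≥ c * GP''`, give `|Phase f α x| ≤ M / 2 * (x - α) ^ 2` and
`Phase (GP + f) α ≥ c * Phase GP α` on `(0, 1)`, and both facts hold for all `f_t` with common
constants. Therefore the integrands `exp (-N * Phase (GP + f_t) α)` and `exp (-N * Phase GP α)`
differ by at most `N * M / 2 * (x - α) ^ 2 * exp (-c * N * Phase GP α x)`. The exponential here is a
beta density up to normalization, whose second moment about `α` is computed exactly by integration
by parts and is of relative size `(α * (1 - α) + 1 / N) / N`. This makes `q - 1` of order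
`α * (1 - α) + 1 / N`, uniformly in `α ∈ [0, 1]`.
-/

/-! ### The model potential -/

lemma GP_eq_neg_binEntropy : GP = -Real.binEntropy := by
  ext x
  simp only [GP, Pi.neg_apply, Real.binEntropy, Real.log_inv]
  ring

lemma continuous_GP : Continuous GP :=
  GP_eq_neg_binEntropy ▸ Real.binEntropy_continuous.neg

lemma deriv_GP (x : ℝ) : deriv GP x = Real.log x - Real.log (1 - x) := by
  rw [GP_eq_neg_binEntropy, deriv.neg, Real.deriv_binEntropy, neg_sub]

lemma iteratedDeriv_two_GP (x : ℝ) : iteratedDeriv 2 GP x = 1 / (x * (1 - x)) := by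
  rw [GP_eq_neg_binEntropy, iteratedDeriv_neg, iteratedDeriv_eq_iterate, Real.deriv2_binEntropy,
    neg_div, neg_neg]

lemma contDiffAt_GP {n : WithTop ℕ∞} {x : ℝ} (hx : x ∈ Ioo (0 : ℝ) 1) : ContDiffAt ℝ n GP x := by
  have hlog : ContDiffAt ℝ n Real.log x := Real.contDiffAt_log.2 hx.1.ne'
  have hone_sub : ContDiffAt ℝ n (fun y : ℝ => 1 - y) x := contDiffAt_const.sub contDiffAt_id
  exact (contDiffAt_id.mul hlog).add (hone_sub.mul (hone_sub.log (sub_pos.2 hx.2).ne'))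

/-! ### The phase as a linear and monotone functional of the potential -/

lemma Phase_add {f g : ℝ → ℝ} {x : ℝ} (hf : DifferentiableAt ℝ f x) (hg : DifferentiableAt ℝ g x)
    (α : ℝ) : Phase (f + g) α x = Phase f α x + Phase g α x := by
  simp only [Phase, deriv_add hf hg, Pi.add_apply]
  ring

lemma Phase_const_smul (c : ℝ) (f : ℝ → ℝ) (α x : ℝ) : Phase (c • f) α x = c * Phase f α x := by
  simp only [Phase, deriv_const_smul_field, Pi.smul_apply, smul_eq_mul]
  ring

lemma Phase_sq (α x : ℝ) : Phase (fun y => y ^ 2) α x = (x - α) ^ 2 := by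
  simp only [Phase, deriv_pow_field]
  ring

lemma continuous_Phase {f : ℝ → ℝ} (hf : ContDiff ℝ 1 f) (α : ℝ) : Continuous (Phase f α) := by
  have := hf.continuous
  have := hf.continuous_deriv le_rfl
  unfold Phase
  fun_prop

lemma Phase_nonneg_of_convexOn {G : ℝ → ℝ} {D : Set ℝ} (hG : ConvexOn ℝ D G) {α x : ℝ}
    (hα : α ∈ D) (hx : x ∈ D) (hdiff : DifferentiableAt ℝ G x) : 0 ≤ Phase G α x := by
  unfold Phase
  rcases lt_trichotomy x α with hlt | rfl | hgt
  · have h := hG.le_slope_of_hasDerivAt hx hα hlt hdiff.hasDerivAt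
    rw [slope_def_field, le_div_iff₀ (sub_pos.2 hlt)] at h
    linarith
  · simp
  · have h := hG.slope_le_of_hasDerivAt hα hx hgt hdiff.hasDerivAt
    rw [slope_def_field, div_le_iff₀ (sub_pos.2 hgt)] at h
    linarith

lemma convexOn_of_iteratedDeriv_two_nonneg {D : Set ℝ} (hD : Convex ℝ D) {f : ℝ → ℝ}
    (hcont : ContinuousOn f D) (hf : ∀ x ∈ interior D, ContDiffAt ℝ 2 f x)
    (hnonneg : ∀ x ∈ interior D, 0 ≤ iteratedDeriv 2 f x) : ConvexOn ℝ D f := by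
  refine convexOn_of_deriv2_nonneg hD hcont
    (fun x hx => ((hf x hx).differentiableAt two_ne_zero).differentiableWithinAt)
    (fun x hx => (((hf x hx).derivWithin (m := 1) one_add_one_eq_two.le).differentiableAt
      one_ne_zero).differentiableWithinAt) fun x hx => ?_
  rw [← iteratedDeriv_eq_iterate]
  exact hnonneg x hx

lemma Phase_mono_of_iteratedDeriv_two_le {D : Set ℝ} (hD : Convex ℝ D) {f g : ℝ → ℝ}
    (hfc : ContinuousOn f D) (hgc : ContinuousOn g D)
    (hf : ∀ x ∈ interior D, ContDiffAt ℝ 2 f x) (hg : ∀ x ∈ interior D, ContDiffAt ℝ 2 g x)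
    (hle : ∀ x ∈ interior D, iteratedDeriv 2 f x ≤ iteratedDeriv 2 g x)
    {α x : ℝ} (hα : α ∈ D) (hx : x ∈ interior D) : Phase f α x ≤ Phase g α x := by
  have hsub : ∀ y ∈ interior D, ContDiffAt ℝ 2 (g - f) y := fun y hy => (hg y hy).sub (hf y hy)
  have hconvex : ConvexOn ℝ D (g - f) :=
    convexOn_of_iteratedDeriv_two_nonneg hD (hgc.sub hfc) hsub fun y hy => by
      rw [iteratedDeriv_sub (hg y hy) (hf y hy)]
      exact sub_nonneg.2 (hle y hy)
  have hnonneg := Phase_nonneg_of_convexOn hconvex hα (interior_subset hx)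
    ((hsub x hx).differentiableAt two_ne_zero)
  have hadd := Phase_add ((hf x hx).differentiableAt two_ne_zero)
    ((hsub x hx).differentiableAt two_ne_zero) α
  rw [add_sub_cancel] at hadd
  linarith

lemma abs_Phase_le_of_abs_iteratedDeriv_two_le {D : Set ℝ} (hD : Convex ℝ D) {f : ℝ → ℝ}
    (hfc : ContinuousOn f D) (hf : ∀ x ∈ interior D, ContDiffAt ℝ 2 f x) {M : ℝ}
    (hM : ∀ x ∈ interior D, |iteratedDeriv 2 f x| ≤ M) {α x : ℝ} (hα : α ∈ D)
    (hx : x ∈ interior D) : |Phase f α x| ≤ M / 2 * (x - α) ^ 2 := by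
  have hquad : ∀ c : ℝ, ContDiff ℝ 2 (c • fun y : ℝ => y ^ 2) := fun c => by fun_prop
  have hquad_deriv : ∀ c y : ℝ, iteratedDeriv 2 (c • fun y : ℝ => y ^ 2) y = 2 * c := fun c y => by
    rw [iteratedDeriv_const_smul_field, iteratedDeriv_eq_iterate, iter_deriv_pow]
    norm_num [Finset.prod_range_succ]
    ring
  have hlower : Phase ((-(M / 2)) • fun y => y ^ 2) α x ≤ Phase f α x :=
    Phase_mono_of_iteratedDeriv_two_le hD (hquad _).continuous.continuousOn hfc
      (fun y _ => (hquad _).contDiffAt) hf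
      (fun y hy => by rw [hquad_deriv]; linarith [(abs_le.1 (hM y hy)).1]) hα hx
  have hupper : Phase f α x ≤ Phase ((M / 2) • fun y => y ^ 2) α x :=
    Phase_mono_of_iteratedDeriv_two_le hD hfc (hquad _).continuous.continuousOn hf
      (fun y _ => (hquad _).contDiffAt)
      (fun y hy => by rw [hquad_deriv]; linarith [(abs_le.1 (hM y hy)).2]) hα hx
  rw [Phase_const_smul, Phase_sq] at hlower hupper
  exact abs_le.2 ⟨by linarith, hupper⟩

/-! ### The phase of the model potential -/

lemma Phase_GP (α x : ℝ) :
    Phase GP α x = GP α - α * Real.log x - (1 - α) * Real.log (1 - x) := by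
  simp only [Phase, deriv_GP, GP]
  ring

lemma Phase_GP_nonneg {α x : ℝ} (hα : α ∈ Icc (0 : ℝ) 1) (hx : x ∈ Ioo (0 : ℝ) 1) :
    0 ≤ Phase GP α x := by
  have hconvex : ConvexOn ℝ (Icc 0 1) GP :=
    GP_eq_neg_binEntropy ▸ Real.strictConcave_binEntropy.concaveOn.neg
  exact Phase_nonneg_of_convexOn hconvex hα (Ioo_subset_Icc_self hx)
    ((contDiffAt_GP hx).differentiableAt one_ne_zero)

lemma mul_log_le_mul_log_convexCombination {a x c : ℝ} (ha : 0 ≤ a) (hx : 0 < x)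
    (hc : c ∈ Icc (0 : ℝ) 1) :
    a * ((1 - c) * Real.log a + c * Real.log x) ≤ a * Real.log ((1 - c) * a + c * x) := by
  rcases ha.eq_or_lt with rfl | ha
  · simp
  · exact mul_le_mul_of_nonneg_left (strictConcaveOn_log_Ioi.concaveOn.2 (mem_Ioi.2 ha)
      (mem_Ioi.2 hx) (sub_nonneg.2 hc.2) hc.1 (sub_add_cancel 1 c)) ha.le

lemma Phase_GP_contract_le {α x c : ℝ} (hα : α ∈ Icc (0 : ℝ) 1) (hx : x ∈ Ioo (0 : ℝ) 1)
    (hc : c ∈ Icc (0 : ℝ) 1) : Phase GP α ((1 - c) * α + c * x) ≤ c * Phase GP α x := by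
  have hleft := mul_log_le_mul_log_convexCombination hα.1 hx.1 hc
  have hright := mul_log_le_mul_log_convexCombination (sub_nonneg.2 hα.2) (sub_pos.2 hx.2) hc
  rw [show (1 - c) * (1 - α) + c * (1 - x) = 1 - ((1 - c) * α + c * x) by ring] at hright
  simp only [Phase_GP, GP]
  linarith

/-! ### The beta weight -/

/-- The continuous extension of `exp (-K * Phase GP α x)` from `(0, 1)` to `[0, 1]`, that is, an
unnormalized beta density. The exponential itself has the wrong values at the endpoints, because
`Real.log 0 = 0`. -/
noncomputable def betaWeight (K α x : ℝ) : ℝ :=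
  Real.exp (-K * GP α) * (x ^ (K * α) * (1 - x) ^ (K * (1 - α)))

lemma betaWeight_eq_exp (K α : ℝ) {x : ℝ} (hx : x ∈ Ioo (0 : ℝ) 1) :
    betaWeight K α x = Real.exp (-K * Phase GP α x) := by
  rw [betaWeight, Real.rpow_def_of_pos hx.1, Real.rpow_def_of_pos (sub_pos.2 hx.2),
    ← Real.exp_add, ← Real.exp_add, Phase_GP]
  ring_nf

lemma betaWeight_nonneg (K α : ℝ) {x : ℝ} (hx : x ∈ Icc (0 : ℝ) 1) : 0 ≤ betaWeight K α x :=
  mul_nonneg (Real.exp_pos _).le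
    (mul_nonneg (Real.rpow_nonneg hx.1 _) (Real.rpow_nonneg (sub_nonneg.2 hx.2) _))

lemma continuous_betaWeight {K α : ℝ} (hK : 0 ≤ K) (hα : α ∈ Icc (0 : ℝ) 1) :
    Continuous (betaWeight K α) := by
  have hleft : Continuous fun x : ℝ => x ^ (K * α) :=
    Real.continuous_rpow_const (mul_nonneg hK hα.1)
  have hright : Continuous fun x : ℝ => (1 - x) ^ (K * (1 - α)) :=
    (Real.continuous_rpow_const (mul_nonneg hK (sub_nonneg.2 hα.2))).comp (continuous_sub_left 1)
  exact continuous_const.mul (hleft.mul hright)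

lemma integral_betaWeight_pos {K α : ℝ} (hK : 0 ≤ K) (hα : α ∈ Icc (0 : ℝ) 1) :
    0 < ∫ x in (0 : ℝ)..1, betaWeight K α x := by
  refine intervalIntegral.intervalIntegral_pos_of_pos_on
    ((continuous_betaWeight hK hα).intervalIntegrable _ _) (fun x hx => ?_) zero_lt_one
  rw [betaWeight_eq_exp K α hx]
  exact Real.exp_pos _

lemma hasDerivAt_betaWeight (K α : ℝ) {x : ℝ} (hx : x ∈ Ioo (0 : ℝ) 1) :
    HasDerivAt (betaWeight K α) (-K * ((x - α) / (x * (1 - x))) * betaWeight K α x) x := by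
  have h0 : x ≠ 0 := hx.1.ne'
  have h1 : 1 - x ≠ 0 := (sub_pos.2 hx.2).ne'
  have hphase : HasDerivAt (Phase GP α) ((x - α) / (x * (1 - x))) x := by
    rw [funext (Phase_GP α)]
    refine ((((Real.hasDerivAt_log h0).const_mul α).const_sub (GP α)).sub
      ((((hasDerivAt_id x).const_sub 1).log h1).const_mul (1 - α))).congr_deriv ?_
    simp only [id]
    field_simp
    ring
  have heq : betaWeight K α =ᶠ[nhds x] fun y => Real.exp (-K * Phase GP α y) := by
    filter_upwards [Ioo_mem_nhds hx.1 hx.2] with y hy using betaWeight_eq_exp K α hy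
  refine ((hphase.const_mul (-K)).exp.congr_of_eventuallyEq heq).congr_deriv ?_
  rw [betaWeight_eq_exp K α hx]
  ring

/-! ### Moments of the beta weight -/

lemma integral_sub_mul_betaWeight_by_parts {K α : ℝ} (hK : 0 ≤ K) (hα : α ∈ Icc (0 : ℝ) 1)
    {φ φ' : ℝ → ℝ} (hφ : ∀ x, HasDerivAt φ (φ' x) x) (hφ' : Continuous φ') :
    K * ∫ x in (0 : ℝ)..1, (x - α) * φ x * betaWeight K α x =
      ∫ x in (0 : ℝ)..1, ((1 - 2 * x) * φ x + x * (1 - x) * φ' x) * betaWeight K α x := by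
  have hw := continuous_betaWeight hK hα
  have hφc : Continuous φ := continuous_iff_continuousAt.2 fun x => (hφ x).continuousAt
  have hzero : ∫ x in (0 : ℝ)..1, (((1 - 2 * x) * φ x + x * (1 - x) * φ' x) * betaWeight K α x -
      K * ((x - α) * φ x * betaWeight K α x)) = 0 := by
    rw [intervalIntegral.integral_eq_sub_of_hasDerivAt_of_le
      (f := fun x => x * (1 - x) * φ x * betaWeight K α x) zero_le_one (by fun_prop)
      (fun x hx => ?_) (Continuous.intervalIntegrable (by fun_prop) _ _)]
    · simp
    · have h0 : x ≠ 0 := hx.1.ne'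
      have h1 : 1 - x ≠ 0 := (sub_pos.2 hx.2).ne'
      refine ((((hasDerivAt_id x).mul ((hasDerivAt_id x).const_sub 1)).mul (hφ x)).mul
        (hasDerivAt_betaWeight K α hx)).congr_deriv ?_
      simp only [id, Pi.mul_apply]
      field_simp
      ring
  rw [intervalIntegral.integral_sub (Continuous.intervalIntegrable (by fun_prop) _ _)
    (Continuous.intervalIntegrable (by fun_prop) _ _), intervalIntegral.integral_const_mul] at hzero
  linarith

lemma integral_sub_mul_betaWeight {K α : ℝ} (hK : 0 ≤ K) (hα : α ∈ Icc (0 : ℝ) 1) :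
    (K + 2) * ∫ x in (0 : ℝ)..1, (x - α) * betaWeight K α x =
      (1 - 2 * α) * ∫ x in (0 : ℝ)..1, betaWeight K α x := by
  have hw := continuous_betaWeight hK hα
  have hparts := integral_sub_mul_betaWeight_by_parts hK hα (fun x => hasDerivAt_const x (1 : ℝ))
    continuous_const
  have hexpand : ∀ x, (1 - 2 * x + x * (1 - x) * 0) * betaWeight K α x =
      (1 - 2 * α) * betaWeight K α x - 2 * ((x - α) * betaWeight K α x) := fun x => by ring
  simp only [mul_one, hexpand] at hparts
  rw [intervalIntegral.integral_sub (Continuous.intervalIntegrable (by fun_prop) _ _)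
    (Continuous.intervalIntegrable (by fun_prop) _ _), intervalIntegral.integral_const_mul,
    intervalIntegral.integral_const_mul] at hparts
  linarith

lemma integral_sub_sq_mul_betaWeight {K α : ℝ} (hK : 0 ≤ K) (hα : α ∈ Icc (0 : ℝ) 1) :
    (K + 3) * ∫ x in (0 : ℝ)..1, (x - α) ^ 2 * betaWeight K α x =
      α * (1 - α) * (∫ x in (0 : ℝ)..1, betaWeight K α x) +
        2 * (1 - 2 * α) * ∫ x in (0 : ℝ)..1, (x - α) * betaWeight K α x := by
  have hw := continuous_betaWeight hK hα
  have hparts := integral_sub_mul_betaWeight_by_parts hK hα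
    (fun x => (hasDerivAt_id x).sub_const α) continuous_const
  have hexpand : ∀ x, ((1 - 2 * x) * (x - α) + x * (1 - x) * 1) * betaWeight K α x =
      α * (1 - α) * betaWeight K α x + 2 * (1 - 2 * α) * ((x - α) * betaWeight K α x) -
        3 * ((x - α) ^ 2 * betaWeight K α x) := fun x => by ring
  simp only [id, hexpand, ← sq] at hparts
  rw [intervalIntegral.integral_sub (Continuous.intervalIntegrable (by fun_prop) _ _)
    (Continuous.intervalIntegrable (by fun_prop) _ _),
    intervalIntegral.integral_add (Continuous.intervalIntegrable (by fun_prop) _ _)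
    (Continuous.intervalIntegrable (by fun_prop) _ _)] at hparts
  simp only [intervalIntegral.integral_const_mul] at hparts
  linarith

lemma integral_sub_sq_mul_betaWeight_le {K α : ℝ} (hK : 0 < K) (hα : α ∈ Icc (0 : ℝ) 1) :
    K * ∫ x in (0 : ℝ)..1, (x - α) ^ 2 * betaWeight K α x ≤
      (α * (1 - α) + 2 / K) * ∫ x in (0 : ℝ)..1, betaWeight K α x := by
  have hfirst := integral_sub_mul_betaWeight hK.le hα
  have hsecond := integral_sub_sq_mul_betaWeight hK.le hα
  have hmass := (integral_betaWeight_pos hK.le hα).le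
  have hsecond_nonneg : 0 ≤ ∫ x in (0 : ℝ)..1, (x - α) ^ 2 * betaWeight K α x :=
    intervalIntegral.integral_nonneg zero_le_one fun x hx =>
      mul_nonneg (sq_nonneg _) (betaWeight_nonneg K α hx)
  set m₀ := ∫ x in (0 : ℝ)..1, betaWeight K α x
  set m₁ := ∫ x in (0 : ℝ)..1, (x - α) * betaWeight K α x
  set m₂ := ∫ x in (0 : ℝ)..1, (x - α) ^ 2 * betaWeight K α x
  have hfirst_le : (1 - 2 * α) * m₁ ≤ m₀ / K := by
    have hsq : (1 - 2 * α) ^ 2 ≤ 1 := by nlinarith [hα.1, hα.2]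
    calc (1 - 2 * α) * m₁ = (1 - 2 * α) ^ 2 * m₀ / (K + 2) := by
          rw [eq_div_iff (by positivity)]
          linear_combination (1 - 2 * α) * hfirst
      _ ≤ 1 * m₀ / K := by gcongr; linarith
      _ = m₀ / K := by rw [one_mul]
  calc K * m₂ ≤ (K + 3) * m₂ := by gcongr; linarith
    _ = α * (1 - α) * m₀ + 2 * ((1 - 2 * α) * m₁) := by rw [hsecond]; ring
    _ ≤ α * (1 - α) * m₀ + 2 * (m₀ / K) := by gcongr
    _ = (α * (1 - α) + 2 / K) * m₀ := by ring

/- Contracting `[0, 1]` towards `α` by the factor `c` multiplies the phase by at most `c`, so the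
weight of exponent `c * K` is dominated by the contracted weight of exponent `K`. -/
lemma integral_betaWeight_mul_le {K α c : ℝ} (hK : 0 ≤ K) (hα : α ∈ Icc (0 : ℝ) 1)
    (hc : c ∈ Ioc (0 : ℝ) 1) :
    ∫ x in (0 : ℝ)..1, betaWeight (c * K) α x ≤ c⁻¹ * ∫ x in (0 : ℝ)..1, betaWeight K α x := by
  have hw := continuous_betaWeight hK hα
  have hcK := continuous_betaWeight (mul_nonneg hc.1.le hK) hα
  have hlow : 0 ≤ (1 - c) * α := mul_nonneg (sub_nonneg.2 hc.2) hα.1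
  have hhigh : (1 - c) * α + c ≤ 1 := by nlinarith [hα.2, hc.2]
  have hpointwise : ∀ x ∈ Ioo (0 : ℝ) 1,
      betaWeight (c * K) α x ≤ betaWeight K α ((1 - c) * α + c * x) := fun x hx => by
    have hmem : (1 - c) * α + c * x ∈ Ioo (0 : ℝ) 1 :=
      ⟨by nlinarith [mul_pos hc.1 hx.1], by nlinarith [mul_lt_mul_of_pos_left hx.2 hc.1]⟩
    rw [betaWeight_eq_exp _ _ hx, betaWeight_eq_exp _ _ hmem, Real.exp_le_exp]
    nlinarith [Phase_GP_contract_le hα hx ⟨hc.1.le, hc.2⟩]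
  calc ∫ x in (0 : ℝ)..1, betaWeight (c * K) α x
      ≤ ∫ x in (0 : ℝ)..1, betaWeight K α ((1 - c) * α + c * x) :=
        intervalIntegral.integral_mono_on_of_le_Ioo zero_le_one (hcK.intervalIntegrable _ _)
          (Continuous.intervalIntegrable (by fun_prop) _ _) hpointwise
    _ = c⁻¹ * ∫ x in ((1 - c) * α)..((1 - c) * α + c), betaWeight K α x := by
        rw [intervalIntegral.integral_comp_add_mul _ hc.1.ne', mul_zero, add_zero, mul_one,
          smul_eq_mul]
    _ ≤ c⁻¹ * ∫ x in (0 : ℝ)..1, betaWeight K α x := by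
        refine mul_le_mul_of_nonneg_left (intervalIntegral.integral_mono_interval hlow
          (le_add_of_nonneg_right hc.1.le) hhigh ?_ (hw.intervalIntegrable _ _))
          (inv_pos.2 hc.1).le
        filter_upwards [MeasureTheory.ae_restrict_mem measurableSet_Ioc] with x hx
        exact betaWeight_nonneg K α (Ioc_subset_Icc_self hx)

/-! ### Perturbations of the model potential -/

/-- The quantitative hypothesis on a perturbation `f` of `GP` from which all estimates follow:
`|f''| ≤ M` and `(GP + f)'' ≥ c * GP''`. The second condition is multiplied by `x * (1 - x)`, which
makes it meaningful at the endpoints. -/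
structure IsPerturbation (c M : ℝ) (f : ℝ → ℝ) : Prop where
  contDiff : ContDiff ℝ 2 f
  abs_le : ∀ x ∈ Icc (0 : ℝ) 1, |iteratedDeriv 2 f x| ≤ M
  le_one_add : ∀ x ∈ Icc (0 : ℝ) 1, c ≤ 1 + x * (1 - x) * iteratedDeriv 2 f x

namespace IsPerturbation

variable {c M : ℝ} {f : ℝ → ℝ}

lemma mono {c' M' : ℝ} (hf : IsPerturbation c M f) (hc : c' ≤ c) (hM : M ≤ M') :
    IsPerturbation c' M' f :=
  ⟨hf.contDiff, fun x hx => (hf.abs_le x hx).trans hM, fun x hx => hc.trans (hf.le_one_add x hx)⟩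

lemma convex_setOf (c M : ℝ) : Convex ℝ {f | IsPerturbation c M f} := by
  intro f₀ h₀ f₁ h₁ a b ha hb hab
  have hf₀ : ContDiff ℝ 2 (a • f₀) := h₀.contDiff.const_smul a
  have hf₁ : ContDiff ℝ 2 (b • f₁) := h₁.contDiff.const_smul b
  have hderiv : ∀ x, iteratedDeriv 2 (a • f₀ + b • f₁) x =
      a * iteratedDeriv 2 f₀ x + b * iteratedDeriv 2 f₁ x := fun x => by
    rw [iteratedDeriv_add hf₀.contDiffAt hf₁.contDiffAt, iteratedDeriv_const_smul_field,
      iteratedDeriv_const_smul_field, smul_eq_mul, smul_eq_mul]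
  refine ⟨hf₀.add hf₁, fun x hx => ?_, fun x hx => ?_⟩
  · calc |iteratedDeriv 2 (a • f₀ + b • f₁) x|
        ≤ a * |iteratedDeriv 2 f₀ x| + b * |iteratedDeriv 2 f₁ x| := by
          simpa only [hderiv, abs_mul, abs_of_nonneg ha, abs_of_nonneg hb] using
            abs_add_le (a * iteratedDeriv 2 f₀ x) (b * iteratedDeriv 2 f₁ x)
      _ ≤ a * M + b * M := by
          gcongr
          exacts [h₀.abs_le x hx, h₁.abs_le x hx]
      _ = M := by rw [← add_mul, hab, one_mul]
  · calc c = a * c + b * c := by rw [← add_mul, hab, one_mul]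
      _ ≤ a * (1 + x * (1 - x) * iteratedDeriv 2 f₀ x) +
          b * (1 + x * (1 - x) * iteratedDeriv 2 f₁ x) := by
          gcongr
          exacts [h₀.le_one_add x hx, h₁.le_one_add x hx]
      _ = 1 + x * (1 - x) * iteratedDeriv 2 (a • f₀ + b • f₁) x := by
          rw [hderiv]
          linear_combination hab

lemma le_one (hf : IsPerturbation c M f) : c ≤ 1 := by
  simpa using hf.le_one_add 0 (left_mem_Icc.2 zero_le_one)

lemma bound_nonneg (hf : IsPerturbation c M f) : 0 ≤ M :=
  (abs_nonneg _).trans (hf.abs_le 0 (left_mem_Icc.2 zero_le_one))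

lemma abs_Phase_le (hf : IsPerturbation c M f) {α x : ℝ} (hα : α ∈ Icc (0 : ℝ) 1)
    (hx : x ∈ Ioo (0 : ℝ) 1) : |Phase f α x| ≤ M / 2 * (x - α) ^ 2 :=
  abs_Phase_le_of_abs_iteratedDeriv_two_le (convex_Icc 0 1) hf.contDiff.continuous.continuousOn
    (fun _ _ => hf.contDiff.contDiffAt) (fun y hy => hf.abs_le y (interior_subset hy)) hα
    (interior_Icc (a := (0 : ℝ)) ▸ hx)

lemma Phase_GP_add (hf : IsPerturbation c M f) {x : ℝ} (hx : x ∈ Ioo (0 : ℝ) 1) (α : ℝ) :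
    Phase (GP + f) α x = Phase GP α x + Phase f α x :=
  Phase_add ((contDiffAt_GP (n := 1) hx).differentiableAt one_ne_zero)
    (hf.contDiff.differentiable two_ne_zero x) α

lemma mul_Phase_GP_le (hf : IsPerturbation c M f) {α x : ℝ} (hα : α ∈ Icc (0 : ℝ) 1)
    (hx : x ∈ Ioo (0 : ℝ) 1) : c * Phase GP α x ≤ Phase (GP + f) α x := by
  have hGP : ∀ y ∈ interior (Icc (0 : ℝ) 1), ContDiffAt ℝ 2 GP y := fun y hy =>
    contDiffAt_GP (interior_Icc (a := (0 : ℝ)) ▸ hy)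
  rw [← Phase_const_smul]
  refine Phase_mono_of_iteratedDeriv_two_le (convex_Icc 0 1)
    (continuous_GP.const_smul c).continuousOn
    (continuous_GP.add hf.contDiff.continuous).continuousOn (fun y hy => (hGP y hy).const_smul c)
    (fun y hy => (hGP y hy).add hf.contDiff.contDiffAt) (fun y hy => ?_) hα
    (interior_Icc (a := (0 : ℝ)) ▸ hx)
  have hle := hf.le_one_add y (interior_subset hy)
  rw [iteratedDeriv_add (hGP y hy) hf.contDiff.contDiffAt, iteratedDeriv_const_smul_field,
    iteratedDeriv_two_GP, smul_eq_mul]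
  rw [interior_Icc] at hy
  have hpos : 0 < y * (1 - y) := mul_pos hy.1 (sub_pos.2 hy.2)
  rw [mul_one_div, div_add' _ _ _ hpos.ne']
  gcongr
  linarith

end IsPerturbation

lemma exists_isPerturbation {f : ℝ → ℝ} (hf : ContDiff ℝ 2 f)
    (hpos : ∀ x ∈ Ioo (0 : ℝ) 1, 0 < iteratedDeriv 2 (GP + f) x) :
    ∃ c M, 0 < c ∧ 0 < M ∧ IsPerturbation c M f := by
  have hcont : Continuous (iteratedDeriv 2 f) := hf.continuous_iteratedDeriv' 2
  have hellipticity : ∀ x ∈ Icc (0 : ℝ) 1, 0 < 1 + x * (1 - x) * iteratedDeriv 2 f x :=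
    fun x hx => by
    rcases hx.1.eq_or_lt with rfl | h0
    · simp
    rcases hx.2.eq_or_lt with rfl | h1
    · simp
    have hprod : 0 < x * (1 - x) := mul_pos h0 (sub_pos.2 h1)
    have h := mul_pos hprod (hpos x ⟨h0, h1⟩)
    rwa [iteratedDeriv_add (contDiffAt_GP ⟨h0, h1⟩) hf.contDiffAt, iteratedDeriv_two_GP, mul_add,
      mul_one_div_cancel hprod.ne'] at h
  obtain ⟨c, hc, hc_le⟩ := isCompact_Icc.exists_forall_le' (a := 0)
    (f := fun x => 1 + x * (1 - x) * iteratedDeriv 2 f x) (by fun_prop) hellipticity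
  obtain ⟨M, hM⟩ := isCompact_Icc.exists_bound_of_continuousOn (s := Icc (0 : ℝ) 1)
    hcont.continuousOn
  exact ⟨c, max M 1, hc, lt_max_of_lt_right one_pos, hf,
    fun x hx => (hM x hx).trans (le_max_left _ _), hc_le⟩

/-! ### Comparison of the norming constants -/

lemma abs_exp_sub_exp_le {a b m : ℝ} (ha : a ≤ m) (hb : b ≤ m) :
    |Real.exp a - Real.exp b| ≤ Real.exp m * |a - b| :=
  (convex_Iic m).norm_image_sub_le_of_norm_deriv_le (fun _ _ => Real.differentiableAt_exp)
    (fun x hx => by simpa using hx) hb ha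

lemma Qnorm_GP (N : ℕ) (α : ℝ) :
    Qnorm GP N α = 2 * Real.pi * ∫ x in (0 : ℝ)..1, betaWeight N α x := by
  rw [Qnorm, intervalIntegral.integral_congr_Ioo_of_le zero_le_one fun x hx =>
    (betaWeight_eq_exp N α hx).symm]

namespace IsPerturbation

variable {c M : ℝ} {f : ℝ → ℝ}

lemma exp_neg_mul_Phase_GP_add (hf : IsPerturbation c M f) (K α : ℝ) {x : ℝ}
    (hx : x ∈ Ioo (0 : ℝ) 1) :
    Real.exp (-K * Phase (GP + f) α x) = betaWeight K α x * Real.exp (-K * Phase f α x) := by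
  rw [hf.Phase_GP_add hx, betaWeight_eq_exp K α hx, mul_add, Real.exp_add]

lemma Qnorm_GP_add (hf : IsPerturbation c M f) (N : ℕ) (α : ℝ) :
    Qnorm (GP + f) N α =
      2 * Real.pi * ∫ x in (0 : ℝ)..1, betaWeight N α x * Real.exp (-N * Phase f α x) := by
  rw [Qnorm, intervalIntegral.integral_congr_Ioo_of_le zero_le_one fun x hx =>
    hf.exp_neg_mul_Phase_GP_add N α hx]

lemma abs_betaWeight_mul_exp_sub_le (hf : IsPerturbation c M f) {K α x : ℝ} (hK : 0 ≤ K)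
    (hα : α ∈ Icc (0 : ℝ) 1) (hx : x ∈ Ioo (0 : ℝ) 1) :
    |betaWeight K α x * Real.exp (-K * Phase f α x) - betaWeight K α x| ≤
      K * (M / 2) * ((x - α) ^ 2 * betaWeight (c * K) α x) := by
  have hGP : c * Phase GP α x ≤ Phase GP α x :=
    mul_le_of_le_one_left (Phase_GP_nonneg hα hx) hf.le_one
  have hdiff : -K * Phase (GP + f) α x - -K * Phase GP α x = -(K * Phase f α x) := by
    rw [hf.Phase_GP_add hx]
    ring
  rw [← hf.exp_neg_mul_Phase_GP_add K α hx, betaWeight_eq_exp K α hx, betaWeight_eq_exp _ α hx]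
  calc |Real.exp (-K * Phase (GP + f) α x) - Real.exp (-K * Phase GP α x)|
      ≤ Real.exp (-(c * K) * Phase GP α x) *
          |-K * Phase (GP + f) α x - -K * Phase GP α x| := by
        refine abs_exp_sub_exp_le ?_ ?_
        · nlinarith [hf.mul_Phase_GP_le hα hx]
        · nlinarith
    _ = Real.exp (-(c * K) * Phase GP α x) * (K * |Phase f α x|) := by
        rw [hdiff, abs_neg, abs_mul, abs_of_nonneg hK]
    _ ≤ Real.exp (-(c * K) * Phase GP α x) * (K * (M / 2 * (x - α) ^ 2)) := by
        gcongr
        exact hf.abs_Phase_le hα hx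
    _ = K * (M / 2) * ((x - α) ^ 2 * Real.exp (-(c * K) * Phase GP α x)) := by ring

lemma abs_integral_betaWeight_mul_exp_sub_le (hf : IsPerturbation c M f) (hc : 0 < c) {K α : ℝ}
    (hK : 0 < K) (hα : α ∈ Icc (0 : ℝ) 1) :
    |(∫ x in (0 : ℝ)..1, betaWeight K α x * Real.exp (-K * Phase f α x)) -
        ∫ x in (0 : ℝ)..1, betaWeight K α x| ≤
      M / (2 * c ^ 2) * (α * (1 - α) + 2 / (c * K)) * ∫ x in (0 : ℝ)..1, betaWeight K α x := by
  have hw := continuous_betaWeight hK.le hα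
  have hcK := mul_pos hc hK
  have hwc := continuous_betaWeight hcK.le hα
  have hphase := continuous_Phase (hf.contDiff.of_le one_le_two) α
  have hM := hf.bound_nonneg
  have hvar : 0 ≤ α * (1 - α) := mul_nonneg hα.1 (sub_nonneg.2 hα.2)
  rw [← intervalIntegral.integral_sub (Continuous.intervalIntegrable (by fun_prop) _ _)
    (hw.intervalIntegrable _ _)]
  calc |∫ x in (0 : ℝ)..1, (betaWeight K α x * Real.exp (-K * Phase f α x) - betaWeight K α x)|
      ≤ ∫ x in (0 : ℝ)..1, |betaWeight K α x * Real.exp (-K * Phase f α x) - betaWeight K α x| :=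
        intervalIntegral.abs_integral_le_integral_abs zero_le_one
    _ ≤ ∫ x in (0 : ℝ)..1, K * (M / 2) * ((x - α) ^ 2 * betaWeight (c * K) α x) :=
        intervalIntegral.integral_mono_on_of_le_Ioo zero_le_one
          (Continuous.intervalIntegrable (by fun_prop) _ _)
          (Continuous.intervalIntegrable (by fun_prop) _ _)
          fun x hx => hf.abs_betaWeight_mul_exp_sub_le hK.le hα hx
    _ = M / (2 * c) * (c * K * ∫ x in (0 : ℝ)..1, (x - α) ^ 2 * betaWeight (c * K) α x) := by
        rw [intervalIntegral.integral_const_mul]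
        field_simp
    _ ≤ M / (2 * c) * ((α * (1 - α) + 2 / (c * K)) *
          (c⁻¹ * ∫ x in (0 : ℝ)..1, betaWeight K α x)) := by
        refine mul_le_mul_of_nonneg_left ((integral_sub_sq_mul_betaWeight_le hcK hα).trans ?_)
          (by positivity)
        gcongr
        exact integral_betaWeight_mul_le hK.le hα ⟨hc, hf.le_one⟩
    _ = M / (2 * c ^ 2) * (α * (1 - α) + 2 / (c * K)) *
          ∫ x in (0 : ℝ)..1, betaWeight K α x := by
        field_simp

lemma abs_Qnorm_div_Qnorm_GP_sub_one_le (hf : IsPerturbation c M f) (hc : 0 < c) {N : ℕ}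
    (hN : 1 ≤ N) {α : ℝ} (hα : α ∈ Icc (0 : ℝ) 1) :
    |Qnorm (GP + f) N α / Qnorm GP N α - 1| ≤ M / c ^ 3 * (α * (1 - α) + 1 / N) := by
  have hN0 : (0 : ℝ) < N := by exact_mod_cast hN
  have hmass := integral_betaWeight_pos hN0.le hα
  have hM := hf.bound_nonneg
  have hvar : 0 ≤ α * (1 - α) := mul_nonneg hα.1 (sub_nonneg.2 hα.2)
  have hhalf : c / 2 ≤ 1 := by linarith [hf.le_one]
  rw [hf.Qnorm_GP_add, Qnorm_GP, mul_div_mul_left _ _ Real.two_pi_pos.ne', div_sub_one hmass.ne',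
    abs_div, abs_of_pos hmass]
  calc _ ≤ M / (2 * c ^ 2) * (α * (1 - α) + 2 / (c * N)) :=
        (div_le_iff₀ hmass).2 (hf.abs_integral_betaWeight_mul_exp_sub_le hc hN0 hα)
    _ = M / c ^ 3 * (c / 2 * (α * (1 - α)) + 1 / N) := by field_simp
    _ ≤ M / c ^ 3 * (α * (1 - α) + 1 / N) := by
        gcongr _ * (?_ + _)
        exact mul_le_of_le_one_left hvar hhalf

end IsPerturbation

lemma mul_one_sub_add_inv_le_two_mul_rpow {x α : ℝ} (hx : 1 ≤ x) (hα : α ≤ x ^ (-(3 : ℝ) / 4)) :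
    α * (1 - α) + 1 / x ≤ 2 * x ^ (-(1 : ℝ) / 3) := by
  have hα_le : α ≤ x ^ (-(1 : ℝ) / 3) :=
    hα.trans (Real.rpow_le_rpow_of_exponent_le hx (by norm_num))
  have hinv_le : 1 / x ≤ x ^ (-(1 : ℝ) / 3) := by
    rw [one_div, ← Real.rpow_neg_one]
    exact Real.rpow_le_rpow_of_exponent_le hx (by norm_num)
  nlinarith [sq_nonneg α]

theorem bergman_cp1_boundary_asymptotics_of_q_general
    (f0 f1 : ℝ → ℝ) (hf0 : ContDiff ℝ 2 f0) (hf1 : ContDiff ℝ 2 f1)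
    (hG0 : ∀ x ∈ Ioo (0 : ℝ) 1, 0 < iteratedDeriv 2 (Gt f0 f1 0) x)
    (hG1 : ∀ x ∈ Ioo (0 : ℝ) 1, 0 < iteratedDeriv 2 (Gt f0 f1 1) x) :
    ∃ C : ℝ, 0 < C ∧
      ∀ N : ℕ, 1 ≤ N → ∀ t ∈ Icc (0 : ℝ) 1, ∀ α ∈ Icc (0 : ℝ) 1,
        |Qnorm (Gt f0 f1 t) N α / Qnorm GP N α - 1| ≤ C * (α * (1 - α) + 1 / N) := by
  have hGt : ∀ t, Gt f0 f1 t = GP + ((1 - t) • f0 + t • f1) := fun _ => rfl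
  simp only [hGt, sub_zero, sub_self, one_smul, zero_smul, add_zero, zero_add] at hG0 hG1 ⊢
  obtain ⟨c₀, M₀, hc₀, hM₀, h₀⟩ := exists_isPerturbation hf0 hG0
  obtain ⟨c₁, M₁, hc₁, -, h₁⟩ := exists_isPerturbation hf1 hG1
  have hc : 0 < min c₀ c₁ := lt_min hc₀ hc₁
  refine ⟨max M₀ M₁ / min c₀ c₁ ^ 3, div_pos (lt_max_of_lt_left hM₀) (pow_pos hc 3),
    fun N hN t ht α hα => ?_⟩
  have hft : IsPerturbation (min c₀ c₁) (max M₀ M₁) ((1 - t) • f0 + t • f1) :=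
    IsPerturbation.convex_setOf _ _ (h₀.mono (min_le_left _ _) (le_max_left _ _))
      (h₁.mono (min_le_right _ _) (le_max_right _ _)) (sub_nonneg.2 ht.2) ht.1 (sub_add_cancel 1 t)
  exact hft.abs_Qnorm_div_Qnorm_GP_sub_one_le hc hN hα

theorem bergman_cp1_boundary_asymptotics_of_q
    (f0 f1 : ℝ → ℝ) (hf0 : ContDiff ℝ (⊤ : ℕ∞) f0) (hf1 : ContDiff ℝ (⊤ : ℕ∞) f1)
    (hG0 : ∀ x ∈ Set.Ioo (0:ℝ) 1, 0 < iteratedDeriv 2 (Gt f0 f1 0) x)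
    (hG1 : ∀ x ∈ Set.Ioo (0:ℝ) 1, 0 < iteratedDeriv 2 (Gt f0 f1 1) x) :
    ∃ C : ℝ, 0 < C ∧
      ∀ N : ℕ, 1 ≤ N → ∀ t ∈ Set.Icc (0:ℝ) 1, ∀ α : ℝ,
        0 < α → α ≤ (N : ℝ) ^ (-(3:ℝ)/4) →
        |Qnorm (Gt f0 f1 t) N α / Qnorm GP N α - 1| ≤ C * (N : ℝ) ^ (-(1:ℝ)/3) := by
  obtain ⟨C, hC, hbound⟩ := bergman_cp1_boundary_asymptotics_of_q_general f0 f1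
    (contDiff_infty.1 hf0 2) (contDiff_infty.1 hf1 2) hG0 hG1
  refine ⟨C * 2, by positivity, fun N hN t ht α hα0 hα => ?_⟩
  have hN1 : (1 : ℝ) ≤ N := by exact_mod_cast hN
  have hα1 : α ≤ 1 := hα.trans (Real.rpow_le_one_of_one_le_of_nonpos hN1 (by norm_num))
  refine (hbound N hN t ht α ⟨hα0.le, hα1⟩).trans ?_
  rw [mul_assoc]
  exact mul_le_mul_of_nonneg_left (mul_one_sub_add_inv_le_two_mul_rpow hN1 hα) hC.le
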